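/- A normed space X has the Daugavet property if and only if for every ε > 0 and every y in the unit sphere of X, the closed convex hull of the set {u ∈ (1+ε)B_X : ‖y + u‖ ≥ 2 − ε} contains the unit sphere of X. -/

import Mathlib

/-- A normed space `X` has the Daugavet property if `‖Id + T‖ = 1 + ‖T‖` for every
rank-one bounded linear operator `T : X → X`. -/
def DaugavetProperty (X : Type*) [SeminormedAddCommGroup X] [NormedSpace ℝ X] : Prop :=
  ∀ (f : X →L[ℝ] ℝ) (x : X),
    ‖ContinuousLinearMap.id ℝ X + f.smulRight x‖ = 1 + ‖f.smulRight x‖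

/-!
By positive homogeneity it suffices to test the Daugavet equation on `f ⊗ y` with `‖f‖ = ‖y‖ = 1`,
where it reads `‖Id + f ⊗ y‖ = 2`. A unit vector `z` almost attaining this norm can be
chosen with `f z ≥ 0`, and then `‖z + f z • y‖ ≈ 2` forces both `f z ≈ 1` and `‖y + z‖ ≈ 2`.
Conversely, any `u` with `‖u‖ ≈ 1`, `f u ≈ 1` and `‖y + u‖ ≈ 2` shows that the norm is `2`.
So the equation for all `f` says that the vectors almost aligned with `y` meet every slice of the
unit ball, which by the Hahn–Banach theorem means that their closed convex hull contains the
sphere.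
-/

section

variable {X : Type*} [SeminormedAddCommGroup X]

/-- For a unit vector `y`, the vectors of `(1 + ε) B_X` for which the norm of
`y + u` is within `ε` of the value `2` allowed by the triangle inequality for unit vectors. -/
def almostAligned (y : X) (ε : ℝ) : Set X :=
  {u | ‖u‖ ≤ 1 + ε ∧ ‖y + u‖ ≥ 2 - ε}

variable [NormedSpace ℝ X]

lemma norm_smul_add_smul_of_norm_add_eq {x y : X} (h : ‖x + y‖ = ‖x‖ + ‖y‖) {a b : ℝ}
    (ha : 0 ≤ a) (hb : 0 ≤ b) : ‖a • x + b • y‖ = a * ‖x‖ + b * ‖y‖ := by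
  wlog hba : b ≤ a generalizing x y a b
  · rw [add_comm (a • x), add_comm (a * ‖x‖)]
    exact this (by rw [add_comm y, h, add_comm]) hb ha (le_of_not_ge hba)
  refine le_antisymm ?_ ?_
  · simpa only [norm_smul_of_nonneg ha, norm_smul_of_nonneg hb] using norm_add_le (a • x) (b • y)
  · calc a * ‖x‖ + b * ‖y‖ = ‖a • (x + y)‖ - ‖(a - b) • y‖ := by
          rw [norm_smul_of_nonneg ha, norm_smul_of_nonneg (sub_nonneg.2 hba), h]
          ring
      _ ≤ ‖a • (x + y) - (a - b) • y‖ := norm_sub_norm_le _ _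
      _ = ‖a • x + b • y‖ := by congr 1; module

lemma norm_inv_norm_smul {x : X} (hx : ‖x‖ ≠ 0) : ‖‖x‖⁻¹ • x‖ = 1 := by
  rw [norm_smul, norm_inv, norm_norm, inv_mul_cancel₀ hx]

lemma exists_norm_eq_one_lt_norm_apply {Y : Type*} [SeminormedAddCommGroup Y] [NormedSpace ℝ Y]
    {T : X →L[ℝ] Y} (hT : 0 < ‖T‖) {r : ℝ} (hr : r < ‖T‖) : ∃ x : X, ‖x‖ = 1 ∧ r < ‖T x‖ := by
  by_contra! hle
  have hmax : ‖T‖ ≤ max r 0 := ContinuousLinearMap.opNorm_le_of_unit_norm (le_max_right r 0)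
    fun x hx => le_max_of_le_left (hle x hx)
  exact hmax.not_gt (max_lt hr hT)

lemma exists_norm_eq_one_lt_apply {f : X →L[ℝ] ℝ} (hf : 0 < ‖f‖) {r : ℝ} (hr : r < ‖f‖) :
    ∃ x : X, ‖x‖ = 1 ∧ r < f x := by
  obtain ⟨x, hx, hrx⟩ := exists_norm_eq_one_lt_norm_apply hf hr
  rcases lt_abs.1 hrx with hpos | hneg
  · exact ⟨x, hx, hpos⟩
  · exact ⟨-x, by rwa [norm_neg], by rwa [map_neg]⟩

lemma exists_lt_apply_of_mem_closure_convexHull {A : Set X} {x : X}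
    (hx : x ∈ closure (convexHull ℝ A)) {f : X →L[ℝ] ℝ} {r : ℝ} (hr : r < f x) :
    ∃ u ∈ A, r < f u := by
  by_contra! hA
  have hsub : closure (convexHull ℝ A) ⊆ {w | f w ≤ r} :=
    closure_minimal (convexHull_min hA (convex_halfSpace_le f.toLinearMap.isLinear r))
      (isClosed_le f.continuous continuous_const)
  exact (hsub hx).not_gt hr

lemma mem_closure_convexHull_of_forall_exists_lt_apply {A : Set X}
    (hA : ∀ f : X →L[ℝ] ℝ, ‖f‖ = 1 → ∀ r < 1, ∃ u ∈ A, r < f u) {x : X} (hx : ‖x‖ = 1) :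
    x ∈ closure (convexHull ℝ A) := by
  by_contra hxA
  obtain ⟨f, s, hfs, hsx⟩ := geometric_hahn_banach_closed_point
    (convex_convexHull ℝ A).closure isClosed_closure hxA
  have hfA : ∀ u ∈ A, f u < s := fun u hu => hfs u (subset_closure (subset_convexHull ℝ A hu))
  have hsf : s < ‖f‖ := hsx.trans_le ((le_abs_self _).trans (f.unit_le_opNorm x hx.le))
  have hf : 0 < ‖f‖ := by
    obtain ⟨g, hg, -⟩ := exists_dual_vector ℝ x (hx ▸ one_ne_zero)
    obtain ⟨u, hu, -⟩ := hA g hg 0 one_pos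
    refine (norm_nonneg f).lt_of_ne' fun hf0 => (hfA u hu).not_ge ?_
    have hfu : ‖f u‖ ≤ 0 := by simpa only [zero_mul] using f.le_of_opNorm_le hf0.le u
    rw [norm_le_zero_iff.1 hfu]
    exact hf0 ▸ hsf.le
  obtain ⟨u, hu, hsu⟩ :=
    hA (‖f‖⁻¹ • f) (norm_inv_norm_smul hf.ne') (‖f‖⁻¹ * s) ((inv_mul_lt_one₀ hf).2 hsf)
  rw [smul_apply, smul_eq_mul] at hsu
  exact (hfA u hu).not_gt (lt_of_mul_lt_mul_left hsu (inv_nonneg.2 hf.le))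

lemma unitSphere_subset_closure_convexHull_iff {A : Set X} :
    {x : X | ‖x‖ = 1} ⊆ closure (convexHull ℝ A) ↔
      ∀ f : X →L[ℝ] ℝ, ‖f‖ = 1 → ∀ r < 1, ∃ u ∈ A, r < f u := by
  refine ⟨fun hA f hf r hr => ?_, fun hA x hx =>
    mem_closure_convexHull_of_forall_exists_lt_apply hA hx⟩
  obtain ⟨x, hx, hrx⟩ :=
    exists_norm_eq_one_lt_apply (zero_lt_one.trans_eq hf.symm) (hr.trans_eq hf.symm)
  exact exists_lt_apply_of_mem_closure_convexHull (hA hx) hrx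

lemma exists_nonneg_apply_lt_norm_add_smul {f : X →L[ℝ] ℝ} {y : X} {r : ℝ}
    (hT : 0 < ‖ContinuousLinearMap.id ℝ X + f.smulRight y‖)
    (hr : r < ‖ContinuousLinearMap.id ℝ X + f.smulRight y‖) :
    ∃ z : X, ‖z‖ = 1 ∧ 0 ≤ f z ∧ r < ‖z + f z • y‖ := by
  obtain ⟨z, hz, hrz⟩ := exists_norm_eq_one_lt_norm_apply hT hr
  rw [add_apply, ContinuousLinearMap.id_apply, ContinuousLinearMap.smulRight_apply] at hrz
  rcases le_total 0 (f z) with hfz | hfz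
  · exact ⟨z, hz, hfz, hrz⟩
  · refine ⟨-z, by rwa [norm_neg], by rwa [map_neg, neg_nonneg], ?_⟩
    rwa [map_neg, neg_smul, ← neg_add, norm_neg]

lemma exists_mem_almostAligned_lt_apply {f : X →L[ℝ] ℝ} {y : X} (hf : ‖f‖ = 1) (hy : ‖y‖ = 1)
    (h : ‖ContinuousLinearMap.id ℝ X + f.smulRight y‖ = 2) {ε r : ℝ} (hε : 0 < ε) (hr : r < 1) :
    ∃ u ∈ almostAligned y ε, r < f u := by
  obtain ⟨δ, hδ, hδ_lt⟩ : ∃ δ, 0 < δ ∧ δ < min (ε / 2) (1 - r) :=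
    exists_between (lt_min (half_pos hε) (sub_pos.2 hr))
  obtain ⟨hδε, hδr⟩ := lt_min_iff.1 hδ_lt
  obtain ⟨z, hz, hfz_nonneg, hlt⟩ :=
    exists_nonneg_apply_lt_norm_add_smul (two_pos.trans_eq h.symm)
      ((sub_lt_self 2 hδ).trans_eq h.symm)
  have hfz_le : f z ≤ 1 := hf ▸ (le_abs_self _).trans (f.unit_le_opNorm z hz.le)
  have hupper : ‖z + f z • y‖ ≤ ‖z‖ + f z := by
    simpa only [norm_smul_of_nonneg hfz_nonneg, hy, mul_one] using norm_add_le z (f z • y)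
  have hlower : ‖z + f z • y‖ ≤ ‖y + z‖ + (1 - f z) :=
    calc ‖z + f z • y‖ = ‖(y + z) - (1 - f z) • y‖ := by congr 1; module
      _ ≤ ‖y + z‖ + ‖(1 - f z) • y‖ := norm_sub_le _ _
      _ = ‖y + z‖ + (1 - f z) := by
        rw [norm_smul_of_nonneg (sub_nonneg.2 hfz_le), hy, mul_one]
  exact ⟨z, ⟨by linarith, by linarith⟩, by linarith⟩

lemma le_norm_id_add_smulRight_mul {f : X →L[ℝ] ℝ} {y u : X} {ε : ℝ} (hf : ‖f‖ ≤ 1)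
    (hy : ‖y‖ ≤ 1) (hu : u ∈ almostAligned y ε) (hfu : 1 - ε ≤ f u) :
    2 - 2 * ε ≤ ‖ContinuousLinearMap.id ℝ X + f.smulRight y‖ * (1 + ε) := by
  have hfu_le : f u ≤ 1 + ε :=
    calc f u ≤ ‖f u‖ := le_abs_self _
      _ ≤ 1 * ‖u‖ := f.le_of_opNorm_le hf u
      _ ≤ 1 + ε := (one_mul ‖u‖).trans_le hu.1
  have hdiff : ‖(1 - f u) • y‖ ≤ ε :=
    calc ‖(1 - f u) • y‖ = |1 - f u| * ‖y‖ := norm_smul _ _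
      _ ≤ |1 - f u| := mul_le_of_le_one_right (abs_nonneg _) hy
      _ ≤ ε := abs_le.2 ⟨by linarith, by linarith⟩
  calc 2 - 2 * ε ≤ ‖y + u‖ - ‖(1 - f u) • y‖ := by linarith [hu.2]
    _ ≤ ‖(y + u) - (1 - f u) • y‖ := norm_sub_norm_le _ _
    _ = ‖(ContinuousLinearMap.id ℝ X + f.smulRight y) u‖ := by
        congr 1
        simp only [add_apply, ContinuousLinearMap.id_apply, ContinuousLinearMap.smulRight_apply]
        module
    _ ≤ ‖ContinuousLinearMap.id ℝ X + f.smulRight y‖ * (1 + ε) :=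
        ContinuousLinearMap.le_opNorm_of_le _ hu.1

lemma norm_id_add_smulRight_eq_two_iff {f : X →L[ℝ] ℝ} {y : X} (hf : ‖f‖ = 1) (hy : ‖y‖ = 1) :
    ‖ContinuousLinearMap.id ℝ X + f.smulRight y‖ = 2 ↔
      ∀ ε > 0, ∀ r < 1, ∃ u ∈ almostAligned y ε, r < f u := by
  refine ⟨fun h ε hε r hr => exists_mem_almostAligned_lt_apply hf hy h hε hr, fun h => ?_⟩
  have hle : ‖ContinuousLinearMap.id ℝ X + f.smulRight y‖ ≤ 2 :=
    calc ‖ContinuousLinearMap.id ℝ X + f.smulRight y‖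
        ≤ ‖ContinuousLinearMap.id ℝ X‖ + ‖f.smulRight y‖ := norm_add_le _ _
      _ ≤ 1 + 1 := by
        gcongr
        · exact ContinuousLinearMap.norm_id_le
        · rw [ContinuousLinearMap.norm_smulRight_apply, hf, hy, one_mul]
      _ = 2 := one_add_one_eq_two
  refine hle.antisymm (le_of_forall_pos_le_add fun η hη => ?_)
  obtain ⟨u, hu, hfu⟩ := h (η / 4) (by positivity) (1 - η / 4) (sub_lt_self 1 (by positivity))
  have hmul : ‖ContinuousLinearMap.id ℝ X + f.smulRight y‖ * (η / 4) ≤ 2 * (η / 4) := by gcongr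
  linarith [le_norm_id_add_smulRight_mul hf.le hy.le hu hfu.le]

lemma norm_id_add_smulRight_of_normalized {f : X →L[ℝ] ℝ} {y : X} (hf : ‖f‖ ≠ 0)
    (hy : ‖y‖ ≠ 0)
    (h : ‖ContinuousLinearMap.id ℝ X + (‖f‖⁻¹ • f).smulRight (‖y‖⁻¹ • y)‖ = 2) :
    ‖ContinuousLinearMap.id ℝ X + f.smulRight y‖ = 1 + ‖f.smulRight y‖ := by
  set T := (‖f‖⁻¹ • f).smulRight (‖y‖⁻¹ • y)
  have : NontrivialTopology X := .of_exists_norm_ne_zero ⟨y, hy⟩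
  have hid : ‖ContinuousLinearMap.id ℝ X‖ = 1 := ContinuousLinearMap.norm_id
  have hT : ‖T‖ = 1 := by
    rw [ContinuousLinearMap.norm_smulRight_apply, norm_inv_norm_smul hf, norm_inv_norm_smul hy,
      one_mul]
  have hfy : f.smulRight y = (‖f‖ * ‖y‖) • T := by
    ext x
    simp only [T, ContinuousLinearMap.smulRight_apply, smul_apply, smul_smul, smul_eq_mul]
    congr 1
    field_simp
  have hadd : ‖ContinuousLinearMap.id ℝ X + T‖ = ‖ContinuousLinearMap.id ℝ X‖ + ‖T‖ := by
    rw [h, hid, hT, one_add_one_eq_two]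
  calc ‖ContinuousLinearMap.id ℝ X + f.smulRight y‖
      = ‖(1 : ℝ) • ContinuousLinearMap.id ℝ X + (‖f‖ * ‖y‖) • T‖ := by rw [one_smul, hfy]
    _ = 1 * ‖ContinuousLinearMap.id ℝ X‖ + ‖f‖ * ‖y‖ * ‖T‖ :=
      norm_smul_add_smul_of_norm_add_eq hadd zero_le_one (by positivity)
    _ = 1 + ‖f.smulRight y‖ := by
      rw [hid, hT, one_mul, mul_one, ContinuousLinearMap.norm_smulRight_apply]

lemma daugavetProperty_iff_norm_id_add_smulRight_eq_two [NontrivialTopology X] :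
    DaugavetProperty X ↔ ∀ (f : X →L[ℝ] ℝ) (y : X), ‖f‖ = 1 → ‖y‖ = 1 →
      ‖ContinuousLinearMap.id ℝ X + f.smulRight y‖ = 2 := by
  refine ⟨fun h f y hf hy => ?_, fun h f y => ?_⟩
  · rw [h, ContinuousLinearMap.norm_smulRight_apply, hf, hy, one_mul, one_add_one_eq_two]
  · by_cases hT : ‖f.smulRight y‖ = 0
    · rw [norm_add_eq_norm_left _ hT, hT, add_zero]
      exact ContinuousLinearMap.norm_id
    · obtain ⟨hf, hy⟩ := mul_ne_zero_iff.1 (ContinuousLinearMap.norm_smulRight_apply f y ▸ hT)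
      exact norm_id_add_smulRight_of_normalized hf hy
        (h _ _ (norm_inv_norm_smul hf) (norm_inv_norm_smul hy))

end

theorem daugavet_iff_sphere_subset_closedConvexHull_general
    (X : Type*) [SeminormedAddCommGroup X] [NormedSpace ℝ X] [NontrivialTopology X] :
    DaugavetProperty X ↔
      ∀ ε : ℝ, 0 < ε → ∀ y : X, ‖y‖ = 1 →
        {x : X | ‖x‖ = 1} ⊆
          closure (convexHull ℝ {u : X | ‖u‖ ≤ 1 + ε ∧ ‖y + u‖ ≥ 2 - ε}) := by
  change _ ↔ ∀ ε : ℝ, 0 < ε → ∀ y : X, ‖y‖ = 1 →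
    {x : X | ‖x‖ = 1} ⊆ closure (convexHull ℝ (almostAligned y ε))
  simp only [unitSphere_subset_closure_convexHull_iff,
    daugavetProperty_iff_norm_id_add_smulRight_eq_two]
  constructor
  · intro h ε hε y hy f hf
    exact (norm_id_add_smulRight_eq_two_iff hf hy).1 (h f y hf hy) ε hε
  · intro h f y hf hy
    exact (norm_id_add_smulRight_eq_two_iff hf hy).2 fun ε hε => h ε hε y hy f hf

theorem daugavet_iff_sphere_subset_closedConvexHull
    (X : Type*) [NormedAddCommGroup X] [NormedSpace ℝ X] [Nontrivial X] :
    DaugavetProperty X ↔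
      ∀ ε : ℝ, 0 < ε → ∀ y : X, ‖y‖ = 1 →
        {x : X | ‖x‖ = 1} ⊆
          closure (convexHull ℝ {u : X | ‖u‖ ≤ 1 + ε ∧ ‖y + u‖ ≥ 2 - ε}) :=
  daugavet_iff_sphere_subset_closedConvexHull_general X
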